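/- arXiv:2308.05588 — 7 statements merged into one kernel-verified Lean document; each statement's English description precedes it below -/
import Mathlib

section
/- If φ₁ over X₁ and φ₂ over X₂ are independent Boolean functions (X₁ ∩ X₂ = ∅) and x ∈ X₁, then Banzhaf(φ₁ ∧ φ₂, x) = Banzhaf(φ₁, x) · #φ₂. -/
/-!
Every set of variables of `φ₁ ∧ φ₂` splits uniquely as `A ∪ B` with `A ⊆ X₁` and `B ⊆ X₂`. Since
`x` lies in `X₁` only, adding it changes `A` and leaves `B` alone, so its marginal contribution
to `A ∪ B` is its contribution to `A` in `φ₁` times the truth value of `φ₂ B`. The double sum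
over `A` and `B` therefore factors.
-/

open Finset

variable {V : Type*} [DecidableEq V]

/-- Number of models of a Boolean function `φ` over variable set `X`:
subsets `Y ⊆ X` with `φ Y = true`. -/
def modelCount (X : Finset V) (φ : Finset V → Bool) : ℕ :=
  (X.powerset.filter fun Y => φ Y).card

/-- Banzhaf value of variable `x` in the Boolean function `φ` over variable set `X`. -/
def banzhaf (X : Finset V) (φ : Finset V → Bool) (x : V) : ℤ :=
  ∑ Y ∈ (X \ {x}).powerset,
    ((if φ (insert x Y) then 1 else 0) - (if φ Y then 1 else 0) : ℤ)

theorem union_inter_eq_left_of_disjoint {A B s : Finset V} (hA : A ⊆ s) (hB : Disjoint B s) :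
    (A ∪ B) ∩ s = A := by
  rw [union_inter_distrib_right, disjoint_iff_inter_eq_empty.mp hB, union_empty,
    inter_eq_left.mpr hA]

theorem union_inter_eq_right_of_disjoint {A B t : Finset V} (hA : Disjoint A t) (hB : B ⊆ t) :
    (A ∪ B) ∩ t = B := by
  rw [union_comm, union_inter_eq_left_of_disjoint hB hA]

theorem injOn_union_powerset_product {s t : Finset V} (hst : Disjoint s t) :
    Set.InjOn (fun p : Finset V × Finset V => p.1 ∪ p.2) (s.powerset ×ˢ t.powerset) := by
  rintro ⟨A, B⟩ hAB ⟨A', B'⟩ hAB' (hunion : A ∪ B = A' ∪ B')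
  simp only [Set.mem_prod, mem_coe, mem_powerset] at hAB hAB'
  obtain ⟨hA, hB⟩ := hAB
  obtain ⟨hA', hB'⟩ := hAB'
  refine Prod.ext ?_ ?_
  · rw [← union_inter_eq_left_of_disjoint hA (hst.symm.mono_left hB), hunion,
      union_inter_eq_left_of_disjoint hA' (hst.symm.mono_left hB')]
  · rw [← union_inter_eq_right_of_disjoint (hst.mono_left hA) hB, hunion,
      union_inter_eq_right_of_disjoint (hst.mono_left hA') hB']

theorem sum_powerset_union_of_disjoint {M : Type*} [AddCommMonoid M] {s t : Finset V}
    (hst : Disjoint s t) (f : Finset V → M) :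
    ∑ Y ∈ (s ∪ t).powerset, f Y = ∑ A ∈ s.powerset, ∑ B ∈ t.powerset, f (A ∪ B) := by
  rw [powerset_union, ← image_sup_product, ← sum_product']
  exact sum_image (mod_cast injOn_union_powerset_product hst)

/-- The marginal contribution of `x` to `Y`: the change of the truth value of `φ`, read as `0` or
`1`, when `x` is added to `Y`. The Banzhaf value sums it over all `Y` that avoid `x`. -/
def marginalContribution (φ : Finset V → Bool) (x : V) (Y : Finset V) : ℤ :=
  (if φ (insert x Y) then 1 else 0) - (if φ Y then 1 else 0)

theorem banzhaf_eq_sum_marginalContribution (X : Finset V) (φ : Finset V → Bool) (x : V) :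
    banzhaf X φ x = ∑ Y ∈ (X \ {x}).powerset, marginalContribution φ x Y :=
  rfl

theorem modelCount_eq_sum {α : Type*} (X : Finset α) (φ : Finset α → Bool) :
    (modelCount X φ : ℤ) = ∑ Y ∈ X.powerset, if φ Y then 1 else 0 :=
  natCast_card_filter _ _

theorem marginalContribution_and {X₁ X₂ A B : Finset V} (φ₁ φ₂ : Finset V → Bool) {x : V}
    (hx : x ∈ X₁) (h : Disjoint X₁ X₂) (hA : A ⊆ X₁) (hB : B ⊆ X₂) :
    marginalContribution (fun Y => φ₁ (Y ∩ X₁) && φ₂ (Y ∩ X₂)) x (A ∪ B) =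
      marginalContribution φ₁ x A * if φ₂ B then 1 else 0 := by
  have value_union {A' : Finset V} (hA' : A' ⊆ X₁) :
      (φ₁ ((A' ∪ B) ∩ X₁) && φ₂ ((A' ∪ B) ∩ X₂)) = (φ₁ A' && φ₂ B) := by
    rw [union_inter_eq_left_of_disjoint hA' (h.symm.mono_left hB),
      union_inter_eq_right_of_disjoint (h.mono_left hA') hB]
  simp only [marginalContribution, ← insert_union, value_union hA,
    value_union (insert_subset hx hA)]
  cases φ₂ B <;> simp

/-- For independent φ₁ over X₁ and φ₂ over X₂ with x ∈ X₁:
Banzhaf(φ₁ ∧ φ₂, x) = Banzhaf(φ₁, x) · #φ₂. -/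
theorem banzhaf_and_independent (X₁ X₂ : Finset V) (φ₁ φ₂ : Finset V → Bool)
    (x : V) (hx : x ∈ X₁) (h : Disjoint X₁ X₂) :
    banzhaf (X₁ ∪ X₂) (fun Y => φ₁ (Y ∩ X₁) && φ₂ (Y ∩ X₂)) x =
      banzhaf X₁ φ₁ x * (modelCount X₂ φ₂ : ℤ) := by
  have hsdiff : (X₁ ∪ X₂) \ {x} = X₁ \ {x} ∪ X₂ := by
    rw [union_sdiff_distrib, sdiff_singleton_eq_erase x X₂,
      erase_eq_of_notMem (disjoint_left.mp h hx)]
  calc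
    _ = ∑ A ∈ (X₁ \ {x}).powerset, ∑ B ∈ X₂.powerset,
          marginalContribution (fun Y => φ₁ (Y ∩ X₁) && φ₂ (Y ∩ X₂)) x (A ∪ B) := by
      rw [banzhaf_eq_sum_marginalContribution, hsdiff,
        sum_powerset_union_of_disjoint (h.mono_left sdiff_subset)]
    _ = ∑ A ∈ (X₁ \ {x}).powerset, ∑ B ∈ X₂.powerset,
          marginalContribution φ₁ x A * if φ₂ B then 1 else 0 :=
      sum_congr rfl fun A hA => sum_congr rfl fun B hB =>
        marginalContribution_and φ₁ φ₂ hx h ((mem_powerset.mp hA).trans sdiff_subset)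
          (mem_powerset.mp hB)
    _ = banzhaf X₁ φ₁ x * (modelCount X₂ φ₂ : ℤ) := by
      rw [banzhaf_eq_sum_marginalContribution, modelCount_eq_sum, sum_mul_sum]
end

section
/- If φ₁ and φ₂ are mutually exclusive Boolean functions over the same variable set X (no subset of X is a model of both), then for every x ∈ X, Banzhaf(φ₁ ∨ φ₂, x) = Banzhaf(φ₁, x) + Banzhaf(φ₂, x). -/
open Finset

variable {V : Type*} [DecidableEq V]

/-!
The Banzhaf value satisfies the transfer identity
`Banzhaf(φ₁ ∨ φ₂) + Banzhaf(φ₁ ∧ φ₂) = Banzhaf(φ₁) + Banzhaf(φ₂)`, by inclusion–exclusion for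
indicators. When `φ₁` and `φ₂` are mutually exclusive, `φ₁ ∧ φ₂` vanishes on the subsets of `X`,
so every `x ∈ X` is a null variable of it and the second term drops out.
-/

theorem ite_or_add_ite_and {M : Type*} [AddZeroClass M] (a b : Bool) (c : M) :
    (if a || b then c else 0) + (if a && b then c else 0) =
      (if a then c else 0) + (if b then c else 0) := by
  cases a <;> cases b <;> simp

theorem banzhaf_or_add_banzhaf_and (X : Finset V) (φ₁ φ₂ : Finset V → Bool) (x : V) :
    banzhaf X (fun Y => φ₁ Y || φ₂ Y) x + banzhaf X (fun Y => φ₁ Y && φ₂ Y) x =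
      banzhaf X φ₁ x + banzhaf X φ₂ x := by
  simp only [banzhaf, ← sum_add_distrib, sub_add_sub_comm, ite_or_add_ite_and]

theorem banzhaf_eq_zero_of_forall_insert_eq {X : Finset V} {φ : Finset V → Bool} {x : V}
    (hφ : ∀ Y ⊆ X \ {x}, φ (insert x Y) = φ Y) : banzhaf X φ x = 0 :=
  sum_eq_zero fun Y hY => by rw [hφ Y (mem_powerset.mp hY), sub_self]

/-- For mutually exclusive φ₁ and φ₂ over the same variable set X and x ∈ X:
Banzhaf(φ₁ ∨ φ₂, x) = Banzhaf(φ₁, x) + Banzhaf(φ₂, x). -/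
theorem banzhaf_or_mutually_exclusive (X : Finset V) (φ₁ φ₂ : Finset V → Bool)
    (h : ∀ Y ⊆ X, ¬(φ₁ Y = true ∧ φ₂ Y = true)) (x : V) (hx : x ∈ X) :
    banzhaf X (fun Y => φ₁ Y || φ₂ Y) x =
      banzhaf X φ₁ x + banzhaf X φ₂ x := by
  have and_eq_false : ∀ Y ⊆ X, (φ₁ Y && φ₂ Y) = false := by
    simpa only [← Bool.and_eq_true, Bool.not_eq_true] using h
  have banzhaf_and : banzhaf X (fun Y => φ₁ Y && φ₂ Y) x = 0 := by
    refine banzhaf_eq_zero_of_forall_insert_eq fun Y hY => ?_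
    have hYX : Y ⊆ X := hY.trans sdiff_subset
    exact (and_eq_false _ (insert_subset hx hYX)).trans (and_eq_false Y hYX).symm
  rw [← banzhaf_or_add_banzhaf_and, banzhaf_and, add_zero]
end

section
/- Let φ be a positive DNF over a finite variable set X with clause set C, and let x ∈ X with {x} ∉ C (so all clauses of φ[x:=1] are nonempty). Suppose: L₁ is the positive DNF over the union of a set of pairwise disjoint clauses of φ[x:=1], with those clauses as its clause set; L₀ is defined likewise from φ[x:=0]; U₁ is a positive DNF over X \ {x} such that every clause of φ[x:=1] contains some clause of U₁; and U₀ is defined likewise from φ[x:=0]. Then #L₁ − #U₀ ≤ Banzhaf(φ, x) ≤ #U₁ − #L₀. -/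
open Finset

variable {V : Type*} [DecidableEq V]

/-- The Boolean function associated with a positive DNF with clause set `C`:
`Y` is a model iff some clause `c ∈ C` satisfies `c ⊆ Y`. -/
def dnfEval (C : Finset (Finset V)) (Y : Finset V) : Bool :=
  decide (∃ c ∈ C, c ⊆ Y)

/-!
Grouping the terms of the Banzhaf value gives `Banzhaf(φ, x) = #φ[x:=1] - #φ[x:=0]`, and both
restrictions of a positive DNF are again positive DNFs. One positive DNF implies another exactly
when each of its clauses contains a clause of the other, so bounding clause sets bound the two model
counts separately. A smaller variable set can only decrease a model count, which is why the lower
bounds may be counted over their own variables.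
-/

omit [DecidableEq V] in
theorem modelCount_mono {X Z : Finset V} {φ ψ : Finset V → Bool} (hXZ : X ⊆ Z) (hφψ : φ ≤ ψ) :
    modelCount X φ ≤ modelCount Z ψ :=
  card_le_card fun Y hY => by
    obtain ⟨hYX, hφY⟩ := mem_filter.mp hY
    exact mem_filter.mpr ⟨powerset_mono.mpr hXZ hYX, hφψ Y hφY⟩

omit [DecidableEq V] in
theorem modelCount_congr {X : Finset V} {φ ψ : Finset V → Bool} (h : ∀ Y ⊆ X, φ Y = ψ Y) :
    modelCount X φ = modelCount X ψ :=
  congrArg card <| filter_congr fun Y hY => by rw [h Y (mem_powerset.mp hY)]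

theorem banzhaf_eq_modelCount_sub (X : Finset V) (φ : Finset V → Bool) (x : V) :
    banzhaf X φ x =
      (modelCount (X \ {x}) (fun Y => φ (insert x Y)) : ℤ) - modelCount (X \ {x}) φ := by
  simp only [banzhaf, modelCount, sum_sub_distrib, sum_boole]

theorem dnfEval_eq_true_iff {C : Finset (Finset V)} {Y : Finset V} :
    dnfEval C Y = true ↔ ∃ c ∈ C, c ⊆ Y :=
  decide_eq_true_iff

/-- `Covers U C` means that every clause of `C` contains a clause of `U`. It is the syntactic form
of implication from the positive DNF with clause set `C` to the one with clause set `U`. -/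
def Covers (U C : Finset (Finset V)) : Prop :=
  ∀ c ∈ C, ∃ u ∈ U, u ⊆ c

omit [DecidableEq V] in
theorem Covers.of_subset {C D : Finset (Finset V)} (h : D ⊆ C) : Covers C D :=
  fun d hd => ⟨d, h hd, Subset.rfl⟩

theorem dnfEval_le_dnfEval_iff {C U : Finset (Finset V)} :
    dnfEval C ≤ dnfEval U ↔ Covers U C := by
  constructor
  · intro h c hc
    exact dnfEval_eq_true_iff.mp (h c (dnfEval_eq_true_iff.mpr ⟨c, hc, Subset.rfl⟩))
  · intro h Y hY
    obtain ⟨c, hc, hcY⟩ := dnfEval_eq_true_iff.mp hY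
    obtain ⟨u, hu, huc⟩ := h c hc
    exact dnfEval_eq_true_iff.mpr ⟨u, hu, huc.trans hcY⟩

theorem Covers.modelCount_le {X Z : Finset V} {C U : Finset (Finset V)} (h : Covers U C)
    (hXZ : X ⊆ Z) : modelCount X (dnfEval C) ≤ modelCount Z (dnfEval U) :=
  modelCount_mono hXZ (dnfEval_le_dnfEval_iff.mpr h)

/-- The clause set of the restriction `φ[x:=1]` of the positive DNF `φ` with clause set `C`. It
contains the empty clause when `{x} ∈ C`, and then the restriction is constantly true. -/
def restrictTrue (C : Finset (Finset V)) (x : V) : Finset (Finset V) :=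
  C.image fun c => c.erase x

/-- The clause set of the restriction `φ[x:=0]` of the positive DNF `φ` with clause set `C`. -/
def restrictFalse (C : Finset (Finset V)) (x : V) : Finset (Finset V) :=
  C.filter fun c => x ∉ c

theorem dnfEval_restrictTrue (C : Finset (Finset V)) (x : V) (Y : Finset V) :
    dnfEval (restrictTrue C x) Y = dnfEval C (insert x Y) := by
  simp only [dnfEval, restrictTrue, exists_mem_image, subset_insert_iff]

theorem dnfEval_restrictFalse (C : Finset (Finset V)) {x : V} {Y : Finset V} (hxY : x ∉ Y) :
    dnfEval (restrictFalse C x) Y = dnfEval C Y := by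
  have notMem_of_subset (c : Finset V) (hcY : c ⊆ Y) : x ∉ c := fun hxc => hxY (hcY hxc)
  simp only [dnfEval, restrictFalse, mem_filter, and_assoc,
    and_iff_right_of_imp (notMem_of_subset _)]

theorem banzhaf_dnfEval (X : Finset V) (C : Finset (Finset V)) (x : V) :
    banzhaf X (dnfEval C) x =
      (modelCount (X \ {x}) (dnfEval (restrictTrue C x)) : ℤ)
        - modelCount (X \ {x}) (dnfEval (restrictFalse C x)) := by
  rw [banzhaf_eq_modelCount_sub,
    modelCount_congr fun Y _ => (dnfEval_restrictTrue C x Y).symm,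
    modelCount_congr fun Y hY =>
      (dnfEval_restrictFalse C fun hxY => notMem_sdiff_of_mem_right
        (mem_singleton_self x) (hY hxY)).symm]

theorem sup_id_subset_of_subset_restrictTrue {X : Finset V} {C D : Finset (Finset V)} {x : V}
    (hC : ∀ c ∈ C, c ⊆ X) (hD : D ⊆ restrictTrue C x) : D.sup id ⊆ X \ {x} :=
  Finset.sup_le fun d hd => by
    obtain ⟨c, hc, rfl⟩ := mem_image.mp (hD hd)
    rw [sdiff_singleton_eq_erase]
    exact erase_subset_erase x (hC c hc)

theorem sup_id_subset_of_subset_restrictFalse {X : Finset V} {C D : Finset (Finset V)} {x : V}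
    (hC : ∀ c ∈ C, c ⊆ X) (hD : D ⊆ restrictFalse C x) : D.sup id ⊆ X \ {x} :=
  Finset.sup_le fun d hd => by
    obtain ⟨hdC, hxd⟩ := mem_filter.mp (hD hd)
    rw [sdiff_singleton_eq_erase]
    exact subset_erase.mpr ⟨hC d hdC, hxd⟩

theorem banzhaf_bounds_general {X Z₁ Z₀ : Finset V} {C L₁ L₀ U₁ U₀ : Finset (Finset V)} {x : V}
    (hZ₁ : Z₁ ⊆ X \ {x}) (hL₁ : Covers (restrictTrue C x) L₁)
    (hZ₀ : Z₀ ⊆ X \ {x}) (hL₀ : Covers (restrictFalse C x) L₀)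
    (hU₁ : Covers U₁ (restrictTrue C x)) (hU₀ : Covers U₀ (restrictFalse C x)) :
    (modelCount Z₁ (dnfEval L₁) : ℤ) - modelCount (X \ {x}) (dnfEval U₀)
        ≤ banzhaf X (dnfEval C) x ∧
      banzhaf X (dnfEval C) x
        ≤ (modelCount (X \ {x}) (dnfEval U₁) : ℤ) - modelCount Z₀ (dnfEval L₀) := by
  rw [banzhaf_dnfEval]
  constructor
  · gcongr ?_ - ?_
    · exact_mod_cast hL₁.modelCount_le hZ₁
    · exact_mod_cast hU₀.modelCount_le Subset.rfl
  · gcongr ?_ - ?_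
    · exact_mod_cast hU₁.modelCount_le Subset.rfl
    · exact_mod_cast hL₀.modelCount_le hZ₀

/-- Bounds on the Banzhaf value of a variable x in a positive DNF φ over X with
clause set C, obtained from lower-bound iDNFs D₁, D₀ and upper-bound DNFs C₁', C₀'
for the restrictions φ[x:=1] (clause set C.image (·.erase x) over X \ {x}) and
φ[x:=0] (clause set C.filter (x ∉ ·) over X \ {x}):
#L₁ − #U₀ ≤ Banzhaf(φ, x) ≤ #U₁ − #L₀. -/
theorem banzhaf_bounds (X : Finset V) (C : Finset (Finset V))
    (hC : ∀ c ∈ C, c.Nonempty ∧ c ⊆ X)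
    (x : V) (hx : x ∈ X) (hxC : ({x} : Finset V) ∉ C)
    (D₁ : Finset (Finset V))
    (hD₁ : D₁ ⊆ C.image (fun c => c.erase x))
    (hD₁disj : ∀ c ∈ D₁, ∀ d ∈ D₁, c ≠ d → Disjoint c d)
    (D₀ : Finset (Finset V))
    (hD₀ : D₀ ⊆ C.filter (fun c => x ∉ c))
    (hD₀disj : ∀ c ∈ D₀, ∀ d ∈ D₀, c ≠ d → Disjoint c d)
    (C₁' : Finset (Finset V))
    (hC₁' : ∀ c ∈ C₁', c.Nonempty ∧ c ⊆ X \ {x})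
    (hC₁'cover : ∀ c ∈ C.image (fun c => c.erase x), ∃ c' ∈ C₁', c' ⊆ c)
    (C₀' : Finset (Finset V))
    (hC₀' : ∀ c ∈ C₀', c.Nonempty ∧ c ⊆ X \ {x})
    (hC₀'cover : ∀ c ∈ C.filter (fun c => x ∉ c), ∃ c' ∈ C₀', c' ⊆ c) :
    (modelCount (D₁.sup id) (dnfEval D₁) : ℤ)
        - (modelCount (X \ {x}) (dnfEval C₀') : ℤ)
      ≤ banzhaf X (dnfEval C) x ∧
    banzhaf X (dnfEval C) x
      ≤ (modelCount (X \ {x}) (dnfEval C₁') : ℤ)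
        - (modelCount (D₀.sup id) (dnfEval D₀) : ℤ) := by
  have hCX : ∀ c ∈ C, c ⊆ X := fun c hc => (hC c hc).2
  exact banzhaf_bounds_general
    (sup_id_subset_of_subset_restrictTrue hCX hD₁) (Covers.of_subset hD₁)
    (sup_id_subset_of_subset_restrictFalse hCX hD₀) (Covers.of_subset hD₀) hC₁'cover hC₀'cover
end

section
/- Let φ be an iDNF over a finite variable set X with |X| = n and pairwise disjoint clauses C₁, …, C_m. Then #φ = 2^n − 2^{n − Σ_{i=1}^m |C_i|} · ∏_{i=1}^m (2^{|C_i|} − 1); equivalently, the number of non-models of φ is 2^{n − Σ_{i=1}^m |C_i|} · ∏_{i=1}^m (2^{|C_i|} − 1). -/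
open Finset

variable {V : Type*} [DecidableEq V]

/-!
Each non-model is a choice, for every clause, of a proper subset of that clause, together with an
arbitrary set of the variables that occur in no clause. As the clauses are disjoint, these choices
are independent, so their numbers multiply.
-/

theorem card_filter_powerset_union {s t : Finset V} (hst : Disjoint s t)
    (p q : Finset V → Prop) [DecidablePred p] [DecidablePred q] :
    #{Y ∈ (s ∪ t).powerset | p (Y ∩ s) ∧ q (Y ∩ t)} =
      #{A ∈ s.powerset | p A} * #{B ∈ t.powerset | q B} := by
  have inter_left {A B : Finset V} (hA : A ⊆ s) (hB : B ⊆ t) : (A ∪ B) ∩ s = A := by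
    rw [union_inter_distrib_right, inter_eq_left.2 hA,
      disjoint_iff_inter_eq_empty.1 (hst.symm.mono_left hB), union_empty]
  have inter_right {A B : Finset V} (hA : A ⊆ s) (hB : B ⊆ t) : (A ∪ B) ∩ t = B := by
    rw [union_inter_distrib_right, inter_eq_left.2 hB,
      disjoint_iff_inter_eq_empty.1 (hst.mono_left hA), empty_union]
  rw [← card_product]
  refine card_nbij' (fun Y ↦ (Y ∩ s, Y ∩ t)) (fun AB ↦ AB.1 ∪ AB.2) ?_ ?_ ?_ ?_
  · intro Y hY
    simp only [mem_coe, mem_product, mem_filter, mem_powerset] at hY ⊢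
    exact ⟨⟨inter_subset_right, hY.2.1⟩, inter_subset_right, hY.2.2⟩
  · rintro ⟨A, B⟩ hAB
    simp only [mem_coe, mem_product, mem_filter, mem_powerset] at hAB ⊢
    obtain ⟨⟨hA, hpA⟩, hB, hqB⟩ := hAB
    rw [inter_left hA hB, inter_right hA hB]
    exact ⟨union_subset_union hA hB, hpA, hqB⟩
  · intro Y hY
    simp only [mem_coe, mem_filter, mem_powerset] at hY
    exact (inter_union_distrib_left Y s t).symm.trans (inter_eq_left.2 hY.1)
  · rintro ⟨A, B⟩ hAB
    simp only [mem_coe, mem_product, mem_filter, mem_powerset] at hAB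
    exact Prod.ext (inter_left hAB.1.1 hAB.2.1) (inter_right hAB.1.1 hAB.2.1)

section Family

variable {ι : Type*} {I : Finset ι} {f : ι → Finset V}

theorem inter_biUnion_inter_of_mem (Y : Finset V) {i : ι} (hi : i ∈ I) :
    Y ∩ I.biUnion f ∩ f i = Y ∩ f i := by
  rw [inter_assoc, inter_eq_right.2 (subset_biUnion_of_mem f hi)]

variable (p : ι → Finset V → Prop) [∀ i, DecidablePred (p i)]

theorem card_filter_powerset_biUnion (hf : (I : Set ι).PairwiseDisjoint f) :
    #{Y ∈ (I.biUnion f).powerset | ∀ i ∈ I, p i (Y ∩ f i)} =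
      ∏ i ∈ I, #{A ∈ (f i).powerset | p i A} := by
  classical
  induction I using Finset.induction_on with
  | empty => simp
  | insert j I hj ih =>
    rw [coe_insert, Set.pairwiseDisjoint_insert_of_notMem (mem_coe.not.2 hj)] at hf
    have hdisj : Disjoint (f j) (I.biUnion f) := (disjoint_biUnion_right _ _ _).2 hf.2
    rw [prod_insert hj, ← ih hf.1, ← card_filter_powerset_union hdisj, biUnion_insert]
    refine congrArg card (filter_congr fun Y _ ↦ ?_)
    simp +contextual only [forall_mem_insert, inter_biUnion_inter_of_mem]

theorem card_filter_powerset_of_pairwiseDisjoint {X : Finset V}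
    (hf : (I : Set ι).PairwiseDisjoint f) (hX : ∀ i ∈ I, f i ⊆ X) :
    #{Y ∈ X.powerset | ∀ i ∈ I, p i (Y ∩ f i)} =
      2 ^ (#X - ∑ i ∈ I, #(f i)) * ∏ i ∈ I, #{A ∈ (f i).powerset | p i A} := by
  let U := I.biUnion f
  have hUX : U ⊆ X := biUnion_subset.2 hX
  calc #{Y ∈ X.powerset | ∀ i ∈ I, p i (Y ∩ f i)}
      = #{Y ∈ (U ∪ X \ U).powerset | (∀ i ∈ I, p i (Y ∩ U ∩ f i)) ∧ True} := by
        rw [union_sdiff_of_subset hUX]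
        simp +contextual only [U, inter_biUnion_inter_of_mem, and_true]
    _ = #{Y ∈ U.powerset | ∀ i ∈ I, p i (Y ∩ f i)} * #{_Y ∈ (X \ U).powerset | True} :=
        card_filter_powerset_union disjoint_sdiff (fun Y ↦ ∀ i ∈ I, p i (Y ∩ f i)) fun _ ↦ True
    _ = 2 ^ (#X - ∑ i ∈ I, #(f i)) * ∏ i ∈ I, #{A ∈ (f i).powerset | p i A} := by
        rw [card_filter_powerset_biUnion p hf, filter_true, card_powerset,
          card_sdiff_of_subset hUX, card_biUnion hf, mul_comm]

end Family

theorem card_filter_powerset_ne_self (c : Finset V) :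
    #{A ∈ c.powerset | A ≠ c} = 2 ^ #c - 1 := by
  rw [filter_ne', card_erase_of_mem (mem_powerset_self c), card_powerset]

theorem not_dnfEval_iff (C : Finset (Finset V)) (Y : Finset V) :
    ¬ dnfEval C Y ↔ ∀ c ∈ C, Y ∩ c ≠ c := by
  simp only [dnfEval, decide_eq_true_eq, not_exists, not_and, ne_eq, inter_eq_right]

theorem modelCount_add_card_filter_not {α : Type*} (X : Finset α) (φ : Finset α → Bool) :
    modelCount X φ + #{Y ∈ X.powerset | ¬ φ Y} = 2 ^ #X := by
  rw [modelCount, card_filter_add_card_filter_not, card_powerset]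

theorem card_filter_not_dnfEval {X : Finset V} {C : Finset (Finset V)}
    (hX : ∀ c ∈ C, c ⊆ X) (hC : (C : Set (Finset V)).PairwiseDisjoint id) :
    #{Y ∈ X.powerset | ¬ dnfEval C Y} = 2 ^ (#X - ∑ c ∈ C, #c) * ∏ c ∈ C, (2 ^ #c - 1) := by
  have hcount := card_filter_powerset_of_pairwiseDisjoint (fun c A ↦ A ≠ c) hC hX
  simp_rw [id_eq, card_filter_powerset_ne_self] at hcount
  simp_rw [not_dnfEval_iff]
  exact hcount

/-- Model count of an iDNF (pairwise-disjoint clauses) over X with |X| = n: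
#φ = 2^n − 2^{n − Σ|Cᵢ|} · ∏ (2^{|Cᵢ|} − 1); equivalently, the number of
non-models is 2^{n − Σ|Cᵢ|} · ∏ (2^{|Cᵢ|} − 1). -/
theorem modelCount_iDNF (X : Finset V) (C : Finset (Finset V))
    (hC : ∀ c ∈ C, c.Nonempty ∧ c ⊆ X)
    (hdisj : ∀ c ∈ C, ∀ d ∈ C, c ≠ d → Disjoint c d) :
    modelCount X (dnfEval C) =
        2 ^ X.card - 2 ^ (X.card - ∑ c ∈ C, c.card) * ∏ c ∈ C, (2 ^ c.card - 1) ∧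
    (X.powerset.filter fun Y => ¬ dnfEval C Y).card =
        2 ^ (X.card - ∑ c ∈ C, c.card) * ∏ c ∈ C, (2 ^ c.card - 1) := by
  have hnot := card_filter_not_dnfEval (fun c hc ↦ (hC c hc).2) hdisj
  refine ⟨?_, hnot⟩
  rw [← hnot, ← modelCount_add_card_filter_not X (dnfEval C), Nat.add_sub_cancel]
end

section
/- With ξ as constructed from a PP2DNF φ over disjoint variable sets X and Y, m ≥ 1, and fresh variables x, y, z₁¹, z₁², …, z_m¹, z_m², the Banzhaf value of x in ξ satisfies Banzhaf(ξ, x) = (#NSat(φ) − 2^{|X|}) · (3^m + 2^m). -/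
open Finset

variable {V : Type*} [DecidableEq V]

/-! Conditioning on `x` turns the clauses `{x, v}` into a prohibition of every `v ∈ Y`, so the
Banzhaf value of `x` is the number of non-models of the remaining clauses minus the number of
those non-models that avoid `Y`. Non-models of DNFs without common variables multiply, so the
gadget on `y, zᵢ¹, zᵢ²` contributes one common factor. A set avoiding `Y` contains no clause of
`φ`, which gives the term `2 ^ |X|`. Conditioning the gadget on `y` in the same way leaves either
`m` disjoint clauses `{zᵢ¹, zᵢ²}`, with `3 ^ m` non-models, or the `2 ^ m` sets avoiding every
`zᵢ²`. -/

/-- The number `#NSat(φ)` of non-models of a Boolean function `φ` over the variable set `X`. -/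
def nonModelCount (X : Finset V) (φ : Finset V → Bool) : ℕ :=
  #{S ∈ X.powerset | ¬ φ S}

/-- The clauses `{x, v}` for `v ∈ T`: the edges of a star with centre `x`, joining a new variable
to a set of old ones. -/
def starClauses (x : V) (T : Finset V) : Finset (Finset V) :=
  T.image fun v => {x, v}

/-- The clauses `{z₁ i, z₂ i}` for `i ∈ s`: the edges of a matching when `Sum.elim z₁ z₂` is
injective, that is, when no variable occurs twice among the values of `z₁` and `z₂`. -/
def matchingClauses {ι : Type*} (z₁ z₂ : ι → V) (s : Finset ι) : Finset (Finset V) :=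
  s.image fun i => {z₁ i, z₂ i}

lemma nonModelCount_congr {α : Type*} {W : Finset α} {φ ψ : Finset α → Bool}
    (h : ∀ S ⊆ W, φ S = ψ S) :
    nonModelCount W φ = nonModelCount W ψ :=
  congrArg card <| filter_congr fun S hS => by rw [h S (mem_powerset.1 hS)]

lemma nonModelCount_eq_sum {α : Type*} (W : Finset α) (φ : Finset α → Bool) :
    nonModelCount W φ = ∑ S ∈ W.powerset, if φ S then 0 else 1 := by
  simp only [nonModelCount, card_filter, ite_not]

lemma nonModelCount_insert {W : Finset V} {x : V} (hx : x ∉ W) (φ : Finset V → Bool) :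
    nonModelCount (insert x W) φ =
      nonModelCount W φ + nonModelCount W fun S => φ (insert x S) := by
  simp only [nonModelCount_eq_sum, sum_powerset_insert hx]

lemma banzhaf_eq_nonModelCount_sub (W : Finset V) (φ : Finset V → Bool) (x : V) :
    banzhaf W φ x =
      nonModelCount (W \ {x}) φ - nonModelCount (W \ {x}) fun S => φ (insert x S) := by
  simp only [banzhaf, nonModelCount_eq_sum, Nat.cast_sum, ← sum_sub_distrib]
  refine sum_congr rfl fun S _ => ?_
  cases φ S <;> cases φ (insert x S) <;> rfl

section PositiveDNF

variable {C D : Finset (Finset V)} {W F S T : Finset V} {x : V}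

lemma dnfEval_union (C D : Finset (Finset V)) (S : Finset V) :
    dnfEval (C ∪ D) S = (dnfEval C S || dnfEval D S) := by
  simp only [dnfEval, mem_union, or_and_right, exists_or, Bool.decide_or]

lemma dnfEval_union_right_of_disjoint (h : ∀ c ∈ C, Disjoint c T) :
    dnfEval C (S ∪ T) = dnfEval C S :=
  decide_eq_decide.2 <| exists_congr fun c => and_congr_right fun hc =>
    ⟨fun hST => (h c hc).left_le_of_le_sup_right hST, fun hS => hS.trans subset_union_left⟩

lemma dnfEval_starClauses_of_notMem (hx : x ∉ S) (T : Finset V) :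
    dnfEval (starClauses x T) S = false := by
  simp [dnfEval, starClauses, insert_subset_iff, hx]

lemma dnfEval_starClauses_insert (hx : x ∉ T) (S : Finset V) :
    dnfEval (starClauses x T) (insert x S) = decide (¬ Disjoint S T) := by
  simp only [dnfEval, starClauses, exists_mem_image, insert_subset_iff, singleton_subset_iff,
    mem_insert, not_disjoint_iff, decide_eq_decide]
  grind

lemma nonModelCount_eq_two_pow (h : ∀ c ∈ C, ¬ c ⊆ W) :
    nonModelCount W (dnfEval C) = 2 ^ #W := by
  rw [nonModelCount, filter_true_of_mem, card_powerset]
  intro S hS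
  simpa [dnfEval] using fun c hc hcS => h c hc (hcS.trans (mem_powerset.1 hS))

lemma nonModelCount_union (hWF : Disjoint W F) (hC : ∀ c ∈ C, Disjoint c F)
    (hD : ∀ d ∈ D, Disjoint d W) :
    nonModelCount (W ∪ F) (dnfEval (C ∪ D)) =
      nonModelCount W (dnfEval C) * nonModelCount F (dnfEval D) := by
  have eval_union : ∀ A ⊆ W, ∀ B ⊆ F,
      dnfEval (C ∪ D) (A ∪ B) = (dnfEval C A || dnfEval D B) := fun A hA B hB => by
    rw [dnfEval_union, dnfEval_union_right_of_disjoint fun c hc => (hC c hc).mono_right hB,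
      union_comm, dnfEval_union_right_of_disjoint fun d hd => (hD d hd).mono_right hA]
  have split : ∀ S ⊆ W ∪ F, S ∩ W ∪ S ∩ F = S := fun S hS => by
    rw [← inter_union_distrib_left, inter_eq_left.2 hS]
  simp only [nonModelCount, ← card_product]
  refine card_nbij' (fun S => (S ∩ W, S ∩ F)) (fun p => p.1 ∪ p.2) ?_ ?_ ?_ ?_
  · intro S hS
    simp only [coe_filter, mem_powerset, Set.mem_ofPred_eq] at hS
    have hAB := eval_union (S ∩ W) inter_subset_right (S ∩ F) inter_subset_right
    rw [split S hS.1] at hAB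
    simpa [hAB, inter_subset_right] using hS.2
  · rintro ⟨A, B⟩ hAB
    simp only [coe_product, coe_filter, mem_powerset, Set.mem_prod, Set.mem_ofPred_eq] at hAB
    simp only [coe_filter, mem_powerset, Set.mem_ofPred_eq,
      eval_union A hAB.1.1 B hAB.2.1, Bool.or_eq_true, not_or]
    exact ⟨union_subset_union hAB.1.1 hAB.2.1, hAB.1.2, hAB.2.2⟩
  · intro S hS
    exact split S (mem_powerset.1 (mem_filter.1 hS).1)
  · rintro ⟨A, B⟩ hAB
    simp only [coe_product, coe_filter, mem_powerset, Set.mem_prod, Set.mem_ofPred_eq] at hAB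
    ext1 <;> grind [disjoint_left]

lemma nonModelCount_union_starClauses (hx : x ∉ W) (C : Finset (Finset V)) (T : Finset V) :
    nonModelCount W (dnfEval (C ∪ starClauses x T)) = nonModelCount W (dnfEval C) :=
  nonModelCount_congr fun S hS => by
    rw [dnfEval_union, dnfEval_starClauses_of_notMem (notMem_mono hS hx), Bool.or_false]

lemma nonModelCount_union_starClauses_insert (hC : ∀ c ∈ C, x ∉ c) (hT : x ∉ T) (W : Finset V) :
    nonModelCount W (fun S => dnfEval (C ∪ starClauses x T) (insert x S)) =
      nonModelCount (W \ T) (dnfEval C) := by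
  have eval_insert (S : Finset V) : dnfEval C (insert x S) = dnfEval C S := by
    rw [insert_eq, union_comm]
    exact dnfEval_union_right_of_disjoint fun c hc => disjoint_singleton_right.2 (hC c hc)
  refine congrArg card ?_
  ext S
  simp only [dnfEval_union, eval_insert, dnfEval_starClauses_insert hT, mem_filter, mem_powerset,
    subset_sdiff, Bool.or_eq_true, decide_eq_true_eq, not_or, not_not]
  tauto

lemma banzhaf_union_starClauses (hW : x ∉ W) (hC : ∀ c ∈ C, x ∉ c) (hT : x ∉ T) :
    banzhaf (insert x W) (dnfEval (C ∪ starClauses x T)) x =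
      nonModelCount W (dnfEval C) - nonModelCount (W \ T) (dnfEval C) := by
  rw [banzhaf_eq_nonModelCount_sub, sdiff_singleton_eq_erase, erase_insert hW,
    nonModelCount_union_starClauses hW, nonModelCount_union_starClauses_insert hC hT]

lemma banzhaf_union_starClauses_of_disjoint {X Y : Finset V} (hXY : Disjoint X Y)
    (hF : Disjoint F (X ∪ Y)) (hxXY : x ∉ X ∪ Y) (hxF : x ∉ F)
    (hC : ∀ c ∈ C, c ⊆ X ∪ Y ∧ ¬ c ⊆ X) (hD : ∀ d ∈ D, d ⊆ F) :
    banzhaf (insert x (X ∪ Y ∪ F)) (dnfEval (C ∪ D ∪ starClauses x Y)) x =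
      ((nonModelCount (X ∪ Y) (dnfEval C) : ℤ) - 2 ^ #X) * nonModelCount F (dnfEval D) := by
  have notMem_clause : ∀ c ∈ C ∪ D, x ∉ c := fun c hc =>
    (mem_union.1 hc).elim (fun h => notMem_mono (hC c h).1 hxXY) fun h => notMem_mono (hD c h) hxF
  have sdiff_eq : (X ∪ Y ∪ F) \ Y = X ∪ F := by
    rw [union_sdiff_distrib, union_sdiff_cancel_right hXY,
      sdiff_eq_self_of_disjoint (hF.mono_right subset_union_right)]
  have count_union {W : Finset V} (hW : W ⊆ X ∪ Y) :
      nonModelCount (W ∪ F) (dnfEval (C ∪ D)) =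
        nonModelCount W (dnfEval C) * nonModelCount F (dnfEval D) :=
    nonModelCount_union (hF.symm.mono_left hW) (fun c hc => hF.symm.mono_left (hC c hc).1)
      fun d hd => hF.mono (hD d hd) hW
  rw [banzhaf_union_starClauses (notMem_union.2 ⟨hxXY, hxF⟩) notMem_clause
      (notMem_mono subset_union_right hxXY), sdiff_eq,
    count_union Subset.rfl, count_union subset_union_left,
    nonModelCount_eq_two_pow fun c hc => (hC c hc).2]
  push_cast
  ring

lemma nonModelCount_singleton_self (W : Finset V) :
    nonModelCount W (dnfEval {W}) = 2 ^ #W - 1 := by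
  have nonModels_eq : {S ∈ W.powerset | ¬ dnfEval {W} S} = W.ssubsets := by
    ext S
    simp [dnfEval, ssubset_iff_subset_not_subset]
  rw [nonModelCount, nonModels_eq, ssubsets, card_erase_of_mem (mem_powerset_self W), card_powerset]

end PositiveDNF

section Gadget

variable {ι : Type*} {z₁ z₂ : ι → V}

lemma subset_of_mem_matchingClauses {s : Finset ι} {c : Finset V}
    (hc : c ∈ matchingClauses z₁ z₂ s) : c ⊆ s.image z₁ ∪ s.image z₂ := by
  obtain ⟨i, hi, rfl⟩ := mem_image.1 hc
  exact union_subset_union (singleton_subset_iff.2 (mem_image_of_mem z₁ hi))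
    (singleton_subset_iff.2 (mem_image_of_mem z₂ hi))

lemma nonModelCount_matchingClauses (hz : Function.Injective (Sum.elim z₁ z₂)) (s : Finset ι) :
    nonModelCount (s.image z₁ ∪ s.image z₂) (dnfEval (matchingClauses z₁ z₂ s)) = 3 ^ #s := by
  classical
  obtain ⟨hz₁, hz₂, hz₁₂⟩ := Sum.elim_injective.1 hz
  induction s using Finset.induction_on with
  | empty => simp [matchingClauses, nonModelCount, dnfEval]
  | insert i s hi ih =>
    have variables_insert : (insert i s).image z₁ ∪ (insert i s).image z₂ =
        {z₁ i, z₂ i} ∪ (s.image z₁ ∪ s.image z₂) := by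
      grind
    have clauses_insert : matchingClauses z₁ z₂ (insert i s) =
        {{z₁ i, z₂ i}} ∪ matchingClauses z₁ z₂ s := by
      rw [matchingClauses, image_insert, insert_eq, matchingClauses]
    have variables_disjoint : Disjoint {z₁ i, z₂ i} (s.image z₁ ∪ s.image z₂) := by
      simp only [disjoint_insert_left, disjoint_singleton_left, mem_union,
        hz₁.mem_finset_image, hz₂.mem_finset_image, hi, false_or, or_false, mem_image]
      exact ⟨fun ⟨j, _, h⟩ => hz₁₂ i j h.symm, fun ⟨j, _, h⟩ => hz₁₂ j i h⟩
    rw [variables_insert, clauses_insert, nonModelCount_union variables_disjoint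
        (fun c hc => mem_singleton.1 hc ▸ variables_disjoint)
        (fun d hd => variables_disjoint.symm.mono_left (subset_of_mem_matchingClauses hd)),
      ih, nonModelCount_singleton_self, card_pair (hz₁₂ i i), card_insert_of_notMem hi, pow_succ' 3]
    rfl

lemma nonModelCount_gadget {y : V} (hz : Function.Injective (Sum.elim z₁ z₂)) {s : Finset ι}
    (hy : y ∉ s.image z₁ ∪ s.image z₂) :
    nonModelCount (insert y (s.image z₁ ∪ s.image z₂))
        (dnfEval (matchingClauses z₁ z₂ s ∪ starClauses y (s.image z₂))) = 3 ^ #s + 2 ^ #s := by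
  obtain ⟨hz₁, -, hz₁₂⟩ := Sum.elim_injective.1 hz
  have images_disjoint : Disjoint (s.image z₁) (s.image z₂) := by
    simpa [disjoint_left] using fun i _ j _ => (hz₁₂ i j).symm
  have not_subset : ∀ c ∈ matchingClauses z₁ z₂ s, ¬ c ⊆ s.image z₁ :=
    forall_mem_image.2 fun i hi h =>
      disjoint_right.1 images_disjoint (mem_image_of_mem z₂ hi) (h (by simp))
  rw [nonModelCount_insert hy, nonModelCount_union_starClauses hy,
    nonModelCount_union_starClauses_insert
      (fun c hc => notMem_mono (subset_of_mem_matchingClauses hc) hy)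
      (notMem_mono subset_union_right hy),
    nonModelCount_matchingClauses hz, union_sdiff_cancel_right images_disjoint,
    nonModelCount_eq_two_pow not_subset, card_image_of_injective s hz₁]

lemma subset_of_mem_gadget {y : V} {s : Finset ι} {c : Finset V}
    (hc : c ∈ matchingClauses z₁ z₂ s ∪ starClauses y (s.image z₂)) :
    c ⊆ insert y (s.image z₁ ∪ s.image z₂) := by
  rcases mem_union.1 hc with hc | hc
  · exact (subset_of_mem_matchingClauses hc).trans (subset_insert _ _)
  · obtain ⟨v, hv, rfl⟩ := mem_image.1 hc
    exact insert_subset_insert y (singleton_subset_iff.2 (mem_union_right _ hv))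

end Gadget

lemma notMem_and_card_eq_of_card_insert {a : V} {s : Finset V} {n : ℕ} (hs : #s ≤ n)
    (h : #(insert a s) = n + 1) : a ∉ s ∧ #s = n := by
  have ha : a ∉ s := fun ha => by rw [insert_eq_of_mem ha] at h; lia
  exact ⟨ha, by rwa [card_insert_of_notMem ha, Nat.add_right_cancel_iff] at h⟩

lemma fresh_of_card_eq {ι : Type*} [Fintype ι] {x y : V} {z₁ z₂ : ι → V}
    (h : #(insert x (insert y (univ.image z₁ ∪ univ.image z₂))) = 2 * Fintype.card ι + 2) :
    x ∉ insert y (univ.image z₁ ∪ univ.image z₂) ∧ y ∉ univ.image z₁ ∪ univ.image z₂ ∧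
      Function.Injective (Sum.elim z₁ z₂) := by
  have image_elim : univ.image z₁ ∪ univ.image z₂ = univ.image (Sum.elim z₁ z₂) := by
    ext v
    simp
  have card_univ_sum : #(univ : Finset (ι ⊕ ι)) = 2 * Fintype.card ι := by
    rw [card_univ, Fintype.card_sum, two_mul]
  rw [image_elim] at h ⊢
  have card_le : #(univ.image (Sum.elim z₁ z₂)) ≤ 2 * Fintype.card ι :=
    card_univ_sum ▸ card_image_le
  obtain ⟨hx, hy_card⟩ := notMem_and_card_eq_of_card_insert
    ((card_insert_le y _).trans (Nat.succ_le_succ card_le)) h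
  obtain ⟨hy, hz_card⟩ := notMem_and_card_eq_of_card_insert card_le hy_card
  refine ⟨hx, hy, ?_⟩
  rw [← Set.injOn_univ, ← coe_univ, ← card_image_iff, hz_card, card_univ_sum]

lemma bipartite_clause_subset_union_and_not_subset {X Y : Finset V} (hXY : Disjoint X Y)
    {E : Finset (V × V)} (hE : E ⊆ X ×ˢ Y) :
    ∀ c ∈ E.image fun p => ({p.1, p.2} : Finset V), c ⊆ X ∪ Y ∧ ¬ c ⊆ X :=
  forall_mem_image.2 fun p hp => by
    obtain ⟨hp₁, hp₂⟩ := mem_product.1 (hE hp)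
    exact ⟨union_subset_union (singleton_subset_iff.2 hp₁) (singleton_subset_iff.2 hp₂),
      fun h => disjoint_right.1 hXY hp₂ (h (by simp))⟩

theorem banzhaf_xi_x_general {ι : Type*} [Fintype ι] (X Y : Finset V) (hXY : Disjoint X Y)
    (C : Finset (Finset V)) (hC : ∀ c ∈ C, c ⊆ X ∪ Y ∧ ¬ c ⊆ X) (x y : V) (z₁ z₂ : ι → V)
    (hfresh_card :
      #(insert x (insert y (univ.image z₁ ∪ univ.image z₂))) = 2 * Fintype.card ι + 2)
    (hfresh_disj : Disjoint (insert x (insert y (univ.image z₁ ∪ univ.image z₂))) (X ∪ Y)) :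
    banzhaf (X ∪ Y ∪ insert x (insert y (univ.image z₁ ∪ univ.image z₂)))
        (dnfEval (C ∪ starClauses x Y ∪ matchingClauses z₁ z₂ univ ∪
          starClauses y (univ.image z₂))) x =
      ((nonModelCount (X ∪ Y) (dnfEval C) : ℤ) - 2 ^ #X) *
        (3 ^ Fintype.card ι + 2 ^ Fintype.card ι) := by
  obtain ⟨hxF, hyZ, hz⟩ := fresh_of_card_eq hfresh_card
  obtain ⟨hxXY, hF⟩ := disjoint_insert_left.1 hfresh_disj
  have clauses_comm : C ∪ starClauses x Y ∪ matchingClauses z₁ z₂ univ ∪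
      starClauses y (univ.image z₂) = C ∪ (matchingClauses z₁ z₂ univ ∪
        starClauses y (univ.image z₂)) ∪ starClauses x Y := by
    ac_rfl
  rw [union_insert, clauses_comm,
    banzhaf_union_starClauses_of_disjoint hXY hF hxXY hxF hC fun _ => subset_of_mem_gadget,
    nonModelCount_gadget hz hyZ, card_univ]
  push_cast
  rfl

/-- For the function ξ built from a PP2DNF φ (edge set E ⊆ X × Y) together with
fresh variables x, y, z₁¹, z₁², …, z_m¹, z_m² and the extra clauses
{x, v} (v ∈ Y), {zᵢ¹, zᵢ²}, and {y, zᵢ²}: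
Banzhaf(ξ, x) = (#NSat(φ) − 2^{|X|}) · (3^m + 2^m). -/
theorem banzhaf_xi_x (X Y : Finset V) (hXY : Disjoint X Y)
    (E : Finset (V × V)) (hE : E ⊆ X ×ˢ Y)
    (m : ℕ) (hm : 1 ≤ m) (x y : V) (z₁ z₂ : Fin m → V)
    (hfresh_card :
      (insert x (insert y
        (Finset.image z₁ Finset.univ ∪ Finset.image z₂ Finset.univ))).card
        = 2 * m + 2)
    (hfresh_disj :
      Disjoint
        (insert x (insert y
          (Finset.image z₁ Finset.univ ∪ Finset.image z₂ Finset.univ)))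
        (X ∪ Y)) :
    banzhaf
        (X ∪ Y ∪ insert x (insert y
          (Finset.image z₁ Finset.univ ∪ Finset.image z₂ Finset.univ)))
        (dnfEval
          ((E.image fun p => ({p.1, p.2} : Finset V))
            ∪ Y.image (fun v => ({x, v} : Finset V))
            ∪ Finset.image (fun i : Fin m => ({z₁ i, z₂ i} : Finset V)) Finset.univ
            ∪ Finset.image (fun i : Fin m => ({y, z₂ i} : Finset V)) Finset.univ))
        x =
      ((((X ∪ Y).powerset.filter fun S =>
          ¬ dnfEval (E.image fun p => ({p.1, p.2} : Finset V)) S).card : ℤ)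
          - 2 ^ X.card) * (3 ^ m + 2 ^ m) := by
  simpa only [Fintype.card_fin, nonModelCount, starClauses, matchingClauses, image_image,
    Function.comp_def] using
    banzhaf_xi_x_general X Y hXY _ (bipartite_clause_subset_union_and_not_subset hXY hE) x y z₁ z₂
      (by rwa [Fintype.card_fin]) hfresh_disj
end

section
/- With ξ as constructed from a PP2DNF φ over disjoint variable sets X and Y, m ≥ 1, and fresh variables x, y, z₁¹, z₁², …, z_m¹, z_m², the Banzhaf value of y in ξ satisfies Banzhaf(ξ, y) = (3^m − 2^m) · (#NSat(φ) + 2^{|X|}). -/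
open Finset

variable {V : Type*} [DecidableEq V]

/-!
Setting `y` to false disables the clauses containing it, and setting it to true deletes `y` from
them, so `Banzhaf(ξ, y) = #NSat(ξ[y := false]) - #NSat(ξ[y := true])`. In both restrictions the
clauses split into those over `X ∪ Y ∪ {x}` and those over the `zᵢ`, so `#NSat` is a product. The
factor of the `zᵢ` is `3 ^ m` for `y` false, since each pair must miss a variable, and `2 ^ m` for
`y` true, since then all `zᵢ²` must be false. The common factor is found by conditioning on `x`:
for `x` false the non-models are those of `φ`, and for `x` true all of `Y` must be false, which
already falsifies `φ` and leaves the `2 ^ |X|` subsets of `X`.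
-/

/-- The non-models over the variable set `X` of the positive DNF with clause set `C`, whose number is
`#NSat`. Clauses containing a variable outside `X` are never satisfied. -/
def nonmodels (X : Finset V) (C : Finset (Finset V)) : Finset (Finset V) :=
  X.powerset.filter fun S => ¬ dnfEval C S

lemma mem_nonmodels {X S : Finset V} {C : Finset (Finset V)} :
    S ∈ nonmodels X C ↔ S ⊆ X ∧ ∀ c ∈ C, ¬ c ⊆ S := by
  simp [nonmodels, dnfEval]

section Restriction

variable {A : Finset V} {C : Finset (Finset V)} {x : V}

lemma dnfEval_insert_var (C : Finset (Finset V)) (x : V) (S : Finset V) :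
    dnfEval C (insert x S) = dnfEval (C.image (·.erase x)) S := by
  simp [dnfEval, subset_insert_iff]

lemma image_erase_eq_self (hC : ∀ c ∈ C, x ∉ c) : C.image (·.erase x) = C := by
  rw [image_congr fun c hc => erase_eq_of_notMem (hC c hc), image_id']

lemma image_erase_image_pair {ι : Type*} {s : Finset ι} {f : ι → V} (hf : ∀ i ∈ s, f i ≠ x) :
    (s.image fun i => ({x, f i} : Finset V)).image (·.erase x) = (s.image f).image singleton := by
  simp only [image_image]
  refine image_congr fun i hi => ?_
  exact erase_insert (notMem_singleton.mpr (hf i hi).symm)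

lemma card_nonmodels_insert_var (hx : x ∉ A) (C : Finset (Finset V)) :
    #(nonmodels (insert x A) C) =
      #(nonmodels A C) + #(nonmodels A (C.image (·.erase x))) := by
  simp_rw [nonmodels, card_filter, sum_powerset_insert hx, dnfEval_insert_var]

lemma banzhaf_dnfEval_insert_var (hx : x ∉ A) (C : Finset (Finset V)) :
    banzhaf (insert x A) (dnfEval C) x =
      #(nonmodels A C) - #(nonmodels A (C.image (·.erase x))) := by
  have indicator_not (b : Bool) : (if ¬ b then 1 else 0 : ℤ) = 1 - if b then 1 else 0 := by
    cases b <;> rfl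
  rw [banzhaf, sdiff_singleton_eq_erase, erase_insert hx]
  simp_rw [nonmodels, natCast_card_filter, indicator_not, ← sum_sub_distrib, dnfEval_insert_var,
    sub_sub_sub_cancel_left]

lemma nonmodels_union_of_not_subset {D : Finset (Finset V)} (hD : ∀ d ∈ D, ¬ d ⊆ A) :
    nonmodels A (C ∪ D) = nonmodels A C := by
  ext S
  simp only [mem_nonmodels, forall_mem_union]
  exact ⟨fun ⟨hS, hC, _⟩ => ⟨hS, hC⟩,
    fun ⟨hS, hC⟩ => ⟨hS, hC, fun d hd hdS => hD d hd (hdS.trans hS)⟩⟩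

end Restriction

section Counting

lemma nonmodels_self (c : Finset V) : nonmodels c {c} = c.ssubsets := by
  ext S
  simp [mem_nonmodels, ssubset_iff_subset_not_subset]

lemma union_inter_eq_left {A S T : Finset V} (hS : S ⊆ A) (hT : Disjoint T A) :
    (S ∪ T) ∩ A = S := by
  rw [union_inter_distrib_right, inter_eq_left.mpr hS, disjoint_iff_inter_eq_empty.mp hT,
    union_empty]

lemma card_nonmodels_union {A B : Finset V} (hAB : Disjoint A B) {C D : Finset (Finset V)}
    (hC : ∀ c ∈ C, c ⊆ A) (hD : ∀ d ∈ D, d ⊆ B) :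
    #(nonmodels (A ∪ B) (C ∪ D)) = #(nonmodels A C) * #(nonmodels B D) := by
  rw [← card_product]
  have inter_left {S T : Finset V} (hS : S ⊆ A) (hT : T ⊆ B) : (S ∪ T) ∩ A = S :=
    union_inter_eq_left hS (hAB.symm.mono_left hT)
  have inter_right {S T : Finset V} (hS : S ⊆ A) (hT : T ⊆ B) : (S ∪ T) ∩ B = T := by
    rw [union_comm, union_inter_eq_left hT (hAB.mono_left hS)]
  refine card_nbij' (fun U => (U ∩ A, U ∩ B)) (fun P => P.1 ∪ P.2) ?_ ?_ ?_ ?_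
  · intro U hU
    simp only [mem_coe, mem_product, mem_nonmodels, forall_mem_union] at hU ⊢
    exact ⟨⟨inter_subset_right, fun c hc h => hU.2.1 c hc (h.trans inter_subset_left)⟩,
      inter_subset_right, fun d hd h => hU.2.2 d hd (h.trans inter_subset_left)⟩
  · rintro ⟨S, T⟩ hST
    simp only [mem_coe, mem_product, mem_nonmodels, forall_mem_union] at hST ⊢
    obtain ⟨⟨hS, hSC⟩, hT, hTD⟩ := hST
    refine ⟨union_subset_union hS hT, fun c hc h => hSC c hc ?_, fun d hd h => hTD d hd ?_⟩
    · exact (subset_inter h (hC c hc)).trans_eq (inter_left hS hT)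
    · exact (subset_inter h (hD d hd)).trans_eq (inter_right hS hT)
  · intro U hU
    change U ∩ A ∪ U ∩ B = U
    rw [← inter_union_distrib_left, inter_eq_left]
    exact (mem_nonmodels.mp hU).1
  · rintro ⟨S, T⟩ hST
    simp only [mem_coe, mem_product, mem_nonmodels] at hST
    simp only [inter_left hST.1.1 hST.2.1, inter_right hST.1.1 hST.2.1]

lemma card_nonmodels_biUnion_self {ι : Type*} {s : Finset ι} {c : ι → Finset V}
    (hc : (s : Set ι).PairwiseDisjoint c) :
    #(nonmodels (s.biUnion c) (s.image c)) = ∏ i ∈ s, (2 ^ #(c i) - 1) := by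
  classical
  induction s using Finset.induction_on with
  | empty => simp [nonmodels, dnfEval]
  | insert i s hi ih =>
    rw [coe_insert, Set.pairwiseDisjoint_insert_of_notMem (mod_cast hi)] at hc
    have hdisj : Disjoint (c i) (s.biUnion c) := (disjoint_biUnion_right ..).mpr hc.2
    rw [biUnion_insert, image_insert, insert_eq,
      card_nonmodels_union hdisj (by simp) (by simpa using fun j hj => subset_biUnion_of_mem c hj),
      nonmodels_self, ← Iio_eq_ssubsets, card_Iio_finset, ih hc.1, prod_insert hi]

lemma nonmodels_union_singletons {X Y : Finset V} (hXY : Disjoint X Y) {C : Finset (Finset V)}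
    (hC : ∀ c ∈ C, ¬ c ⊆ X) :
    nonmodels (X ∪ Y) (C ∪ Y.image singleton) = X.powerset := by
  ext S
  simp only [mem_nonmodels, forall_mem_union, forall_mem_image, singleton_subset_iff, mem_powerset]
  constructor
  · rintro ⟨hS, -, hSY⟩
    exact (disjoint_right.mpr hSY).left_le_of_le_sup_right hS
  · intro hS
    exact ⟨hS.trans subset_union_left, fun c hc hcS => hC c hc (hcS.trans hS),
      fun v hv hvS => disjoint_left.mp hXY (hS hvS) hv⟩

lemma card_nonmodels_insert_var_pairs {X Y : Finset V} (hXY : Disjoint X Y)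
    {C : Finset (Finset V)} {x : V} (hx : x ∉ X ∪ Y) (hCx : ∀ c ∈ C, x ∉ c)
    (hCX : ∀ c ∈ C, ¬ c ⊆ X) :
    #(nonmodels (insert x (X ∪ Y)) (C ∪ Y.image fun v => {x, v})) =
      #(nonmodels (X ∪ Y) C) + 2 ^ #X := by
  have hxY : ∀ v ∈ Y, v ≠ x := by
    rintro v hv rfl
    exact hx (mem_union_right X hv)
  have x_false : nonmodels (X ∪ Y) (C ∪ Y.image fun v => {x, v}) = nonmodels (X ∪ Y) C :=
    nonmodels_union_of_not_subset <| forall_mem_image.mpr fun v _ h =>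
      hx (h (mem_insert_self x {v}))
  have x_true : nonmodels (X ∪ Y) ((C ∪ Y.image fun v => {x, v}).image (·.erase x)) =
      X.powerset := by
    rw [image_union, image_erase_eq_self hCx, image_erase_image_pair hxY, image_id',
      nonmodels_union_singletons hXY hCX]
  rw [card_nonmodels_insert_var hx, x_false, x_true, card_powerset]

end Counting

section Pairs

variable {ι : Type*} [Fintype ι] {z₁ z₂ : ι → V}

lemma image_univ_sumElim : univ.image (Sum.elim z₁ z₂) = univ.image z₁ ∪ univ.image z₂ := by
  ext v
  simp

lemma disjoint_image_of_sumElim_injective (hz : (Sum.elim z₁ z₂).Injective) :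
    Disjoint (univ.image z₁) (univ.image z₂) := by
  have hz₁₂ : ∀ i j, z₁ i ≠ z₂ j := (Sum.elim_injective.mp hz).2.2
  simpa [disjoint_left, eq_comm] using hz₁₂

lemma card_nonmodels_pairs (hz : (Sum.elim z₁ z₂).Injective) :
    #(nonmodels (univ.image z₁ ∪ univ.image z₂) (univ.image fun i => {z₁ i, z₂ i})) =
      3 ^ Fintype.card ι := by
  obtain ⟨hz₁, hz₂, hz₁₂⟩ := Sum.elim_injective.mp hz
  have hdisj : ((univ : Finset ι) : Set ι).PairwiseDisjoint fun i => ({z₁ i, z₂ i} : Finset V) := by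
    intro i _ j _ hij
    simp [hz₁.ne_iff, hz₂.ne_iff, hz₁₂, fun k l => (hz₁₂ k l).symm, Ne.symm hij]
  have biUnion_pairs : (univ.biUnion fun i => ({z₁ i, z₂ i} : Finset V)) =
      univ.image z₁ ∪ univ.image z₂ := by
    ext v
    simp [exists_or, eq_comm]
  rw [← biUnion_pairs, card_nonmodels_biUnion_self hdisj]
  simp [card_pair (hz₁₂ _ _)]

lemma card_nonmodels_pairs_union_singletons (hz : (Sum.elim z₁ z₂).Injective) :
    #(nonmodels (univ.image z₁ ∪ univ.image z₂)
        ((univ.image fun i => {z₁ i, z₂ i}) ∪ (univ.image z₂).image singleton)) =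
      2 ^ Fintype.card ι := by
  have hz₁ : z₁.Injective := (Sum.elim_injective.mp hz).1
  have hdisj := disjoint_image_of_sumElim_injective hz
  have pair_not_subset : ∀ i, ¬ ({z₁ i, z₂ i} : Finset V) ⊆ univ.image z₁ := fun i h =>
    disjoint_right.mp hdisj (mem_image_of_mem z₂ (mem_univ i)) (h (by simp))
  rw [nonmodels_union_singletons hdisj (by simpa using pair_not_subset), card_powerset,
    card_image_of_injective _ hz₁, card_univ]

lemma banzhaf_insert_pairs {A : Finset V} {C : Finset (Finset V)} (hC : ∀ c ∈ C, c ⊆ A)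
    (hz : (Sum.elim z₁ z₂).Injective) (hAz : Disjoint A (univ.image z₁ ∪ univ.image z₂)) {y : V}
    (hy : y ∉ A ∪ (univ.image z₁ ∪ univ.image z₂)) :
    banzhaf (insert y (A ∪ (univ.image z₁ ∪ univ.image z₂)))
        (dnfEval (C ∪ (univ.image fun i => {z₁ i, z₂ i}) ∪ univ.image fun i => {y, z₂ i})) y =
      (3 ^ Fintype.card ι - 2 ^ Fintype.card ι) * #(nonmodels A C) := by
  set Z := univ.image z₁ ∪ univ.image z₂ with hZ
  set P : Finset (Finset V) := univ.image fun i => {z₁ i, z₂ i} with hP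
  have z₂_mem (i : ι) : z₂ i ∈ Z := mem_union_right _ (mem_image_of_mem z₂ (mem_univ i))
  have pair_subset : ∀ p ∈ P, p ⊆ Z := by
    simp [hP, hZ, insert_subset_iff]
  have notMem_clause : ∀ c ∈ C ∪ P, y ∉ c := fun c hc hyc =>
    hy ((mem_union.mp hc).elim (fun h => mem_union_left Z (hC c h hyc))
      fun h => mem_union_right A (pair_subset c h hyc))
  have z₂_ne : ∀ i ∈ univ, z₂ i ≠ y := fun i _ h => hy (mem_union_right A (h ▸ z₂_mem i))
  have y_false : nonmodels (A ∪ Z) (C ∪ P ∪ univ.image fun i => {y, z₂ i}) =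
      nonmodels (A ∪ Z) (C ∪ P) :=
    nonmodels_union_of_not_subset <| forall_mem_image.mpr fun i _ h =>
      hy (h (mem_insert_self y {z₂ i}))
  have y_true : (C ∪ P ∪ univ.image fun i => {y, z₂ i}).image (·.erase y) =
      C ∪ (P ∪ (univ.image z₂).image singleton) := by
    rw [image_union, image_erase_eq_self notMem_clause, image_erase_image_pair z₂_ne, union_assoc]
  have clause_subset : ∀ p ∈ P ∪ (univ.image z₂).image singleton, p ⊆ Z := by
    rw [forall_mem_union]
    exact ⟨pair_subset, by simpa using z₂_mem⟩
  rw [banzhaf_dnfEval_insert_var hy, y_false, y_true, card_nonmodels_union hAz hC pair_subset,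
    card_nonmodels_union hAz hC clause_subset, card_nonmodels_pairs hz,
    card_nonmodels_pairs_union_singletons hz]
  push_cast
  ring

lemma fresh_of_card_insert_insert_image {x y : V} {z : ι → V}
    (h : #(insert x (insert y (univ.image z))) = Fintype.card ι + 2) :
    x ∉ insert y (univ.image z) ∧ y ∉ univ.image z ∧ z.Injective := by
  have card_z_le : #(univ.image z) ≤ Fintype.card ι := card_image_le
  have hx : x ∉ insert y (univ.image z) := fun hx => by
    have := card_insert_le y (univ.image z)
    rw [insert_eq_of_mem hx] at h
    omega
  rw [card_insert_of_notMem hx] at h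
  have hy : y ∉ univ.image z := fun hy => by
    rw [insert_eq_of_mem hy] at h
    omega
  rw [card_insert_of_notMem hy] at h
  refine ⟨hx, hy, fun i j hij => ?_⟩
  exact injOn_of_card_image_eq (by simpa using h) (mem_coe.mpr (mem_univ i))
    (mem_coe.mpr (mem_univ j)) hij

end Pairs

section BipartiteClauses

variable {X Y : Finset V} {E : Finset (V × V)}

lemma image_pair_subset_union (hE : E ⊆ X ×ˢ Y) :
    ∀ c ∈ E.image fun p => ({p.1, p.2} : Finset V), c ⊆ X ∪ Y := by
  refine forall_mem_image.mpr fun p hp => ?_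
  obtain ⟨hpX, hpY⟩ := mem_product.mp (hE hp)
  exact insert_subset (mem_union_left Y hpX) (singleton_subset_iff.mpr (mem_union_right X hpY))

lemma image_pair_not_subset_left (hXY : Disjoint X Y) (hE : E ⊆ X ×ˢ Y) :
    ∀ c ∈ E.image fun p => ({p.1, p.2} : Finset V), ¬ c ⊆ X :=
  forall_mem_image.mpr fun p hp hpX =>
    disjoint_right.mp hXY (mem_product.mp (hE hp)).2 (hpX (by simp))

end BipartiteClauses

theorem banzhaf_xi_y_general {ι : Type*} [Fintype ι] {X Y : Finset V} (hXY : Disjoint X Y)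
    {C : Finset (Finset V)} (hC : ∀ c ∈ C, c ⊆ X ∪ Y) (hCX : ∀ c ∈ C, ¬ c ⊆ X)
    {x y : V} {z₁ z₂ : ι → V}
    (hfresh_card : #(insert x (insert y (univ.image z₁ ∪ univ.image z₂))) =
      2 * Fintype.card ι + 2)
    (hfresh_disj : Disjoint (insert x (insert y (univ.image z₁ ∪ univ.image z₂))) (X ∪ Y)) :
    banzhaf (X ∪ Y ∪ insert x (insert y (univ.image z₁ ∪ univ.image z₂)))
        (dnfEval (C ∪ (Y.image fun v => {x, v}) ∪ (univ.image fun i => {z₁ i, z₂ i}) ∪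
          univ.image fun i => {y, z₂ i})) y =
      (3 ^ Fintype.card ι - 2 ^ Fintype.card ι) * (#(nonmodels (X ∪ Y) C) + 2 ^ #X) := by
  rw [two_mul, ← Fintype.card_sum, ← image_univ_sumElim] at hfresh_card
  obtain ⟨hx, hy, hz⟩ := fresh_of_card_insert_insert_image hfresh_card
  rw [image_univ_sumElim] at hx hy
  rw [mem_insert, not_or] at hx
  rw [disjoint_insert_left, disjoint_insert_left] at hfresh_disj
  obtain ⟨hxA, hyA, hZA⟩ := hfresh_disj
  have clause_subset : ∀ c ∈ C ∪ Y.image fun v => {x, v}, c ⊆ insert x (X ∪ Y) := by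
    rw [forall_mem_union, forall_mem_image]
    exact ⟨fun c hc => (hC c hc).trans (subset_insert x _), fun v hv =>
      insert_subset_insert x (singleton_subset_iff.mpr (mem_union_right X hv))⟩
  have hdisj : Disjoint (insert x (X ∪ Y)) (univ.image z₁ ∪ univ.image z₂) :=
    disjoint_insert_left.mpr ⟨hx.2, hZA.symm⟩
  have hy_fresh : y ∉ insert x (X ∪ Y) ∪ (univ.image z₁ ∪ univ.image z₂) := by
    rw [notMem_union, mem_insert, not_or]
    exact ⟨⟨Ne.symm hx.1, hyA⟩, hy⟩
  rw [union_insert, union_insert, insert_comm, ← insert_union,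
    banzhaf_insert_pairs clause_subset hz hdisj hy_fresh,
    card_nonmodels_insert_var_pairs hXY hxA (fun c hc h => hxA (hC c hc h)) hCX]
  push_cast
  rfl

/-- For the function ξ built from a PP2DNF φ (edge set E ⊆ X × Y) together with
fresh variables x, y, z₁¹, z₁², …, z_m¹, z_m² and the extra clauses
{x, v} (v ∈ Y), {zᵢ¹, zᵢ²}, and {y, zᵢ²}:
Banzhaf(ξ, y) = (3^m − 2^m) · (#NSat(φ) + 2^{|X|}). -/
theorem banzhaf_xi_y (X Y : Finset V) (hXY : Disjoint X Y)
    (E : Finset (V × V)) (hE : E ⊆ X ×ˢ Y)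
    (m : ℕ) (hm : 1 ≤ m) (x y : V) (z₁ z₂ : Fin m → V)
    (hfresh_card :
      (insert x (insert y
        (Finset.image z₁ Finset.univ ∪ Finset.image z₂ Finset.univ))).card
        = 2 * m + 2)
    (hfresh_disj :
      Disjoint
        (insert x (insert y
          (Finset.image z₁ Finset.univ ∪ Finset.image z₂ Finset.univ)))
        (X ∪ Y)) :
    banzhaf
        (X ∪ Y ∪ insert x (insert y
          (Finset.image z₁ Finset.univ ∪ Finset.image z₂ Finset.univ)))
        (dnfEval
          ((E.image fun p => ({p.1, p.2} : Finset V))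
            ∪ Y.image (fun v => ({x, v} : Finset V))
            ∪ Finset.image (fun i : Fin m => ({z₁ i, z₂ i} : Finset V)) Finset.univ
            ∪ Finset.image (fun i : Fin m => ({y, z₂ i} : Finset V)) Finset.univ))
        y =
      ((3 : ℤ) ^ m - 2 ^ m) *
        ((((X ∪ Y).powerset.filter fun S =>
            ¬ dnfEval (E.image fun p => ({p.1, p.2} : Finset V)) S).card : ℤ)
          + 2 ^ X.card) := by
  simpa [nonmodels] using banzhaf_xi_y_general hXY (image_pair_subset_union hE)
    (image_pair_not_subset_left hXY hE) (by simpa using hfresh_card) hfresh_disj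
end

section
/- There exist a finite variable set X, a monotone Boolean function φ over X, and variables x, y ∈ X such that Banzhaf(φ, x) > Banzhaf(φ, y) while Shapley(φ, x) < Shapley(φ, y); that is, ranking variables by Banzhaf value and ranking them by Shapley value can differ even for monotone Boolean functions. -/
open Finset

variable {V : Type*} [DecidableEq V]

/-- Shapley value of variable x in the Boolean function φ over variable set X. -/
def shapley (X : Finset V) (φ : Finset V → Bool) (x : V) : ℚ :=
  ∑ Y ∈ (X \ {x}).powerset,
    ((Y.card.factorial * (X.card - Y.card - 1).factorial : ℚ) / (X.card.factorial : ℚ))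
      * ((if φ (insert x Y) then 1 else 0) - (if φ Y then 1 else 0))

/-!
In the function `(x ∧ f) ∨ (y ∧ g)`, with `f` and `g` over a set `Z` of `m` further variables, the
two Banzhaf values differ by twice the difference of the numbers of models of `f` and of `g`, while
the Shapley values compare the proportions of models among the `t`-subsets of `Z`, averaged over
`t = 0, …, m`.

For `m = 6`, let `f` say that at least two variables are true, and `g` that at least one of three
given variables is. Then `f` fails on `1 + 6 = 7` sets and `g` on `2 ^ 3 = 8`, so `x` has the larger
Banzhaf value. But the failures of `f` fill the two smallest layers, and so their proportions add up
to `1 + 1 = 2`, whereas those of `g` give `1 + 3/6 + 3/15 + 1/20 = 7/4`: `x` has the smaller Shapley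
value.
-/

/-- The value of `x` in `φ` when a set `Y` of other variables has weight `w #Y`. Up to normalization
these are the semivalues of cooperative game theory; Banzhaf and Shapley values are instances. -/
def semivalue {R : Type*} [Ring R] (w : ℕ → R) (X : Finset V) (φ : Finset V → Bool) (x : V) : R :=
  ∑ Y ∈ (X \ {x}).powerset, w #Y * ((if φ (insert x Y) then 1 else 0) - (if φ Y then 1 else 0))

/-- The weight of a `t`-subset of the other variables in the Shapley value over `n` variables.
It is meant for `t < n`, where the subtraction does not truncate. -/
def shapleyWeight (n t : ℕ) : ℚ :=
  (t.factorial * (n - t - 1).factorial : ℚ) / n.factorial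

theorem banzhaf_eq_semivalue (X : Finset V) (φ : Finset V → Bool) (x : V) :
    banzhaf X φ x = semivalue (fun _ ↦ 1) X φ x := by
  simp only [banzhaf, semivalue, one_mul]

theorem shapley_eq_semivalue (X : Finset V) (φ : Finset V → Bool) (x : V) :
    shapley X φ x = semivalue (shapleyWeight #X) X φ x :=
  rfl

theorem shapleyWeight_add_shapleyWeight_succ {m t : ℕ} (ht : t ≤ m) :
    shapleyWeight (m + 2) t + shapleyWeight (m + 2) (t + 1) = 1 / m.choose t / (m + 1) := by
  obtain ⟨r, rfl⟩ := Nat.exists_eq_add_of_le ht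
  have hr : t + r + 2 - t - 1 = r + 1 := by lia
  have hr' : t + r + 2 - (t + 1) - 1 = r := by lia
  rw [shapleyWeight, shapleyWeight, hr, hr', Nat.cast_add_choose]
  simp only [Nat.factorial_succ]
  push_cast
  field_simp
  ring

section TwoVariables

variable {Z : Finset V} {x y : V}

theorem semivalue_insert_insert {R : Type*} [Ring R] (w : ℕ → R) (φ : Finset V → Bool)
    (hxy : x ≠ y) (hx : x ∉ Z) (hy : y ∉ Z) :
    semivalue w (insert x (insert y Z)) φ x =
      ∑ T ∈ Z.powerset,
        (w #T * ((if φ (insert x T) then 1 else 0) - (if φ T then 1 else 0)) +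
          w (#T + 1) * ((if φ (insert x (insert y T)) then 1 else 0) -
            (if φ (insert y T) then 1 else 0))) := by
  have hdiff : insert x (insert y Z) \ {x} = insert y Z := by
    rw [sdiff_singleton_eq_erase, erase_insert (by simp [hxy, hx])]
  rw [semivalue, hdiff, sum_powerset_insert hy, ← sum_add_distrib]
  refine sum_congr rfl fun T hT ↦ ?_
  rw [card_insert_of_notMem fun h ↦ hy (mem_powerset.1 hT h)]

theorem semivalue_sub_semivalue {R : Type*} [Ring R] (w : ℕ → R) (φ : Finset V → Bool)
    (hxy : x ≠ y) (hx : x ∉ Z) (hy : y ∉ Z) :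
    semivalue w (insert x (insert y Z)) φ x - semivalue w (insert x (insert y Z)) φ y =
      ∑ T ∈ Z.powerset, (w #T + w (#T + 1)) *
        ((if φ (insert x T) then 1 else 0) - (if φ (insert y T) then 1 else 0)) := by
  rw [semivalue_insert_insert w φ hxy hx hy, insert_comm x y Z,
    semivalue_insert_insert w φ hxy.symm hy hx, ← sum_sub_distrib]
  refine sum_congr rfl fun T _ ↦ ?_
  rw [insert_comm y x T]
  noncomm_ring

/-- The Boolean function `(x ∧ f) ∨ (y ∧ g)`, where `f` and `g` do not see the variables `x`
and `y`. -/
def guardedOr (x y : V) (f g : Finset V → Bool) (Y : Finset V) : Bool :=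
  (decide (x ∈ Y) && f (Y \ {x, y})) || (decide (y ∈ Y) && g (Y \ {x, y}))

theorem guardedOr_comm (x y : V) (f g : Finset V → Bool) :
    guardedOr x y f g = guardedOr y x g f := by
  funext Y
  rw [guardedOr, guardedOr, pair_comm x y, Bool.or_comm]

theorem guardedOr_insert_left (f g : Finset V → Bool) (hxy : x ≠ y) (hx : x ∉ Z) (hy : y ∉ Z) :
    guardedOr x y f g (insert x Z) = f Z := by
  have hZ : insert x Z \ {x, y} = Z := by grind
  simp [guardedOr, hZ, hxy.symm, hy]

theorem guardedOr_insert_right (f g : Finset V → Bool) (hxy : x ≠ y) (hx : x ∉ Z) (hy : y ∉ Z) :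
    guardedOr x y f g (insert y Z) = g Z := by
  rw [guardedOr_comm, guardedOr_insert_left g f hxy.symm hy hx]

theorem monotone_guardedOr (x y : V) {f g : Finset V → Bool} (hf : Monotone f) (hg : Monotone g) :
    Monotone (guardedOr x y f g) := by
  intro Y Y' hY
  have hsdiff : Y \ {x, y} ⊆ Y' \ {x, y} := sdiff_subset_sdiff hY Subset.rfl
  have hf' := Bool.le_iff_imp.1 (hf hsdiff)
  have hg' := Bool.le_iff_imp.1 (hg hsdiff)
  simp only [Bool.le_iff_imp, guardedOr, Bool.or_eq_true, Bool.and_eq_true, decide_eq_true_eq]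
  exact Or.imp (And.imp (@hY x) hf') (And.imp (@hY y) hg')

theorem semivalue_guardedOr_sub {R : Type*} [Ring R] (w : ℕ → R) (f g : Finset V → Bool)
    (hxy : x ≠ y) (hx : x ∉ Z) (hy : y ∉ Z) :
    semivalue w (insert x (insert y Z)) (guardedOr x y f g) x -
        semivalue w (insert x (insert y Z)) (guardedOr x y f g) y =
      ∑ T ∈ Z.powerset with f T, (w #T + w (#T + 1)) -
        ∑ T ∈ Z.powerset with g T, (w #T + w (#T + 1)) := by
  rw [semivalue_sub_semivalue w _ hxy hx hy, sum_filter, sum_filter, ← sum_sub_distrib]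
  refine sum_congr rfl fun T hT ↦ ?_
  have hxT : x ∉ T := fun h ↦ hx (mem_powerset.1 hT h)
  have hyT : y ∉ T := fun h ↦ hy (mem_powerset.1 hT h)
  rw [guardedOr_insert_left f g hxy hxT hyT, guardedOr_insert_right f g hxy hxT hyT, mul_sub,
    mul_ite, mul_ite, mul_one, mul_zero]

/-- The sum over `t = 0, …, #Z` of the proportion of models of `f` among the `t`-subsets of `Z`. It
plays for Shapley values the role of `modelCount` for Banzhaf values. -/
def layerDensitySum (Z : Finset V) (f : Finset V → Bool) : ℚ :=
  ∑ T ∈ Z.powerset with f T, 1 / ((#Z).choose #T : ℚ)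

theorem banzhaf_guardedOr_sub (f g : Finset V → Bool) (hxy : x ≠ y) (hx : x ∉ Z) (hy : y ∉ Z) :
    banzhaf (insert x (insert y Z)) (guardedOr x y f g) x -
        banzhaf (insert x (insert y Z)) (guardedOr x y f g) y =
      2 * ((modelCount Z f : ℤ) - modelCount Z g) := by
  rw [banzhaf_eq_semivalue, banzhaf_eq_semivalue, semivalue_guardedOr_sub _ f g hxy hx hy,
    sum_const, sum_const, modelCount, modelCount, nsmul_eq_mul, nsmul_eq_mul]
  ring

theorem shapley_guardedOr_sub (f g : Finset V → Bool) (hxy : x ≠ y) (hx : x ∉ Z) (hy : y ∉ Z) :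
    shapley (insert x (insert y Z)) (guardedOr x y f g) x -
        shapley (insert x (insert y Z)) (guardedOr x y f g) y =
      (layerDensitySum Z f - layerDensitySum Z g) / (#Z + 1) := by
  have hcard : #(insert x (insert y Z)) = #Z + 2 := by
    rw [card_insert_of_notMem (by simp [hxy, hx]), card_insert_of_notMem hy]
  have hsum (h : Finset V → Bool) :
      ∑ T ∈ Z.powerset with h T, (shapleyWeight (#Z + 2) #T + shapleyWeight (#Z + 2) (#T + 1)) =
        layerDensitySum Z h / (#Z + 1) := by
    rw [layerDensitySum, sum_div]
    exact sum_congr rfl fun T hT ↦ shapleyWeight_add_shapleyWeight_succ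
      (card_le_card (mem_powerset.1 (mem_filter.1 hT).1))
  rw [shapley_eq_semivalue, shapley_eq_semivalue, hcard, semivalue_guardedOr_sub _ f g hxy hx hy,
    hsum, hsum, sub_div]

theorem banzhaf_guardedOr_lt_iff (f g : Finset V → Bool) (hxy : x ≠ y) (hx : x ∉ Z)
    (hy : y ∉ Z) :
    banzhaf (insert x (insert y Z)) (guardedOr x y f g) y <
        banzhaf (insert x (insert y Z)) (guardedOr x y f g) x ↔
      modelCount Z g < modelCount Z f := by
  have hsub := banzhaf_guardedOr_sub f g hxy hx hy
  lia

theorem shapley_guardedOr_lt_iff (f g : Finset V → Bool) (hxy : x ≠ y) (hx : x ∉ Z)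
    (hy : y ∉ Z) :
    shapley (insert x (insert y Z)) (guardedOr x y f g) x <
        shapley (insert x (insert y Z)) (guardedOr x y f g) y ↔
      layerDensitySum Z f < layerDensitySum Z g := by
  have hpos : (0 : ℚ) < #Z + 1 := by positivity
  rw [← sub_neg, shapley_guardedOr_sub f g hxy hx hy, div_lt_iff₀ hpos, zero_mul, sub_neg]

end TwoVariables

/-- The threshold function stating that at least `k` variables are true. -/
def atLeast (k : ℕ) (T : Finset V) : Bool :=
  decide (k ≤ #T)

/-- The disjunction of the variables in `A`. -/
def meets (A T : Finset V) : Bool :=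
  decide (¬Disjoint T A)

theorem monotone_atLeast {α : Type*} (k : ℕ) : Monotone (atLeast k : Finset α → Bool) := by
  intro T T' hT
  simp only [Bool.le_iff_imp, atLeast, decide_eq_true_eq]
  exact fun hk ↦ hk.trans (card_le_card hT)

theorem monotone_meets (A : Finset V) : Monotone (meets A) := by
  intro T T' hT
  simp only [Bool.le_iff_imp, meets, decide_eq_true_eq]
  exact mt (Disjoint.mono_left hT)

section LayerSums

variable {M : Type*} [AddCommMonoid M] (w : ℕ → M)

theorem sum_powerset_atLeast {α : Type*} (Z : Finset α) (k : ℕ) :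
    ∑ T ∈ Z.powerset with atLeast k T, w #T = ∑ t ∈ Icc k #Z, (#Z).choose t • w t := by
  have hIcc : {t ∈ range (#Z + 1) | k ≤ t} = Icc k #Z := by grind
  simp only [atLeast, decide_eq_true_eq]
  rw [sum_filter, sum_powerset_apply_card (fun t ↦ if k ≤ t then w t else 0), ← hIcc, sum_filter]
  simp only [smul_ite, smul_zero]

theorem sum_powerset_meets_add (Z A : Finset V) :
    ∑ T ∈ Z.powerset with meets A T, w #T + ∑ t ∈ range (#(Z \ A) + 1), (#(Z \ A)).choose t • w t =
      ∑ t ∈ range (#Z + 1), (#Z).choose t • w t := by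
  have hcompl : {T ∈ Z.powerset | ¬meets A T} = (Z \ A).powerset := by
    ext T
    simp only [meets, mem_filter, mem_powerset, decide_eq_true_eq, not_not, subset_sdiff]
  rw [← sum_powerset_apply_card, ← sum_powerset_apply_card, ← hcompl,
    sum_filter_add_sum_filter_not]

end LayerSums

theorem modelCount_atLeast {α : Type*} (Z : Finset α) (k : ℕ) :
    modelCount Z (atLeast k) = ∑ t ∈ Icc k #Z, (#Z).choose t := by
  simpa [modelCount] using sum_powerset_atLeast (M := ℕ) (fun _ ↦ 1) Z k

theorem modelCount_meets_add (Z A : Finset V) :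
    modelCount Z (meets A) + 2 ^ #(Z \ A) = 2 ^ #Z := by
  simpa [modelCount, Nat.sum_range_choose] using sum_powerset_meets_add (M := ℕ) (fun _ ↦ 1) Z A

theorem choose_smul_one_div_choose {m t : ℕ} (ht : t ≤ m) :
    m.choose t • (1 / (m.choose t : ℚ)) = 1 := by
  rw [nsmul_eq_mul, mul_one_div_cancel (Nat.cast_ne_zero.2 (Nat.choose_pos ht).ne')]

theorem layerDensitySum_atLeast {α : Type*} (Z : Finset α) (k : ℕ) :
    layerDensitySum Z (atLeast k) = (#Z + 1 - k : ℕ) := by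
  rw [layerDensitySum, sum_powerset_atLeast (fun t ↦ 1 / ((#Z).choose t : ℚ)),
    sum_congr rfl fun t ht ↦ choose_smul_one_div_choose (mem_Icc.1 ht).2, sum_const,
    Nat.card_Icc, nsmul_one]

theorem layerDensitySum_meets_add (Z A : Finset V) :
    layerDensitySum Z (meets A) +
        ∑ t ∈ range (#(Z \ A) + 1), ((#(Z \ A)).choose t : ℚ) / (#Z).choose t = #Z + 1 := by
  have hsum := sum_powerset_meets_add (fun t ↦ 1 / ((#Z).choose t : ℚ)) Z A
  rw [sum_congr rfl fun t ht ↦ choose_smul_one_div_choose (mem_range_succ_iff.1 ht)] at hsum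
  simpa [layerDensitySum, div_eq_mul_inv] using hsum

theorem modelCount_meets_lt_modelCount_atLeast :
    modelCount (range 6) (meets (range 3)) < modelCount (range 6) (atLeast 2) := by
  have hatLeast : modelCount (range 6) (atLeast 2) = 57 := by
    rw [modelCount_atLeast, card_range]
    decide
  have hmeets : modelCount (range 6) (meets (range 3)) + 2 ^ 3 = 2 ^ 6 :=
    modelCount_meets_add (range 6) (range 3)
  lia

theorem layerDensitySum_atLeast_lt_layerDensitySum_meets :
    layerDensitySum (range 6) (atLeast 2) < layerDensitySum (range 6) (meets (range 3)) := by
  have hatLeast : layerDensitySum (range 6) (atLeast 2) = 5 := by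
    rw [layerDensitySum_atLeast, card_range]
    norm_num
  have hmeets := layerDensitySum_meets_add (range 6) (range 3)
  have hcard : #(range 6 \ range 3) = 3 := rfl
  have hfail : ∑ t ∈ range (3 + 1), (Nat.choose 3 t : ℚ) / Nat.choose 6 t = 7 / 4 := by
    norm_num [sum_range_succ, Nat.choose]
  rw [hcard, card_range, hfail] at hmeets
  push_cast at hmeets
  linarith

/-- Banzhaf-based and Shapley-based rankings can differ, even for monotone
Boolean functions: there are a monotone φ over X and variables x, y ∈ X with
Banzhaf(φ, x) > Banzhaf(φ, y) but Shapley(φ, x) < Shapley(φ, y). -/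
theorem banzhaf_shapley_ranking_differ :
    ∃ (X : Finset ℕ) (φ : Finset ℕ → Bool) (x y : ℕ),
      x ∈ X ∧ y ∈ X ∧
      (∀ Y Y' : Finset ℕ, Y ⊆ Y' → Y' ⊆ X → φ Y = true → φ Y' = true) ∧
      banzhaf X φ y < banzhaf X φ x ∧
      shapley X φ x < shapley X φ y := by
  have hmono : Monotone (guardedOr 6 7 (atLeast 2) (meets (range 3))) :=
    monotone_guardedOr 6 7 (monotone_atLeast 2) (monotone_meets (range 3))
  have hne : (6 : ℕ) ≠ 7 := by decide
  have h6 : 6 ∉ range 6 := by decide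
  have h7 : 7 ∉ range 6 := by decide
  exact ⟨insert 6 (insert 7 (range 6)), guardedOr 6 7 (atLeast 2) (meets (range 3)), 6, 7,
    by decide, by decide, fun Y Y' hY _ ↦ Bool.le_iff_imp.1 (hmono hY),
    (banzhaf_guardedOr_lt_iff _ _ hne h6 h7).2 modelCount_meets_lt_modelCount_atLeast,
    (shapley_guardedOr_lt_iff _ _ hne h6 h7).2 layerDensitySum_atLeast_lt_layerDensitySum_meets⟩
end
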